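/- arXiv:2507.12077 — 2 statements merged into one kernel-verified Lean document; each statement's English description precedes it below -/
import Mathlib

section
/- Every finite poset (P,<) admits a partition (B,U) with B containing all deficit elements and U containing all surplus elements, such that e(B,U) ≥ e(P,P)/2. -/
open Finset
open scoped Classical

/-- `e X Y` counts pairs `(x,y)` with `x ∈ X`, `y ∈ Y`, `x < y`. -/
noncomputable def e {P : Type*} [Fintype P] [PartialOrder P] (X Y : Finset P) : ℕ :=
  ((X ×ˢ Y).filter fun p => p.1 < p.2).card

/-!
Let `d v` be the number of elements above `v` minus the number of elements below `v`. Summing `d`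
over the lower part of a cut `(B, U)` that separates the deficit elements from the surplus elements
gives `e B U - e U B`, and `d` sums to `0` over the whole poset, so `∑ |d| = 2 * (e B U - e U B)`.
It remains to see that `∑ |d|` is at least the number of relations. Since `d` is strictly
decreasing, an element `v` minimizing `|d v|` has only elements with `d > 0` below it and only
elements with `d < 0` above it. Deleting `v` therefore decreases `|d|` by one at each element
comparable to `v`, which pays for exactly the relations lost, and induction applies.
-/

theorem card_filter_erase_add {α : Type*} {s : Finset α} {a : α} (ha : a ∈ s) (p : α → Prop) :
    #{b ∈ s.erase a | p b} + (if p a then 1 else 0) = #{b ∈ s | p b} := by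
  simp only [card_filter, sum_erase_add _ _ ha]

section NetDegree

variable {P : Type*} [Preorder P] {S : Finset P} {u v : P}

/-- The net degree of `v` in `S`: how many more elements of `S` lie above `v` than below it. With
`S = univ`, deficit elements have positive and surplus elements negative net degree. -/
noncomputable def netDegree (S : Finset P) (v : P) : ℤ :=
  #{u ∈ S | v < u} - #{u ∈ S | u < v}

theorem netDegree_lt_netDegree (hv : v ∈ S) (huv : u < v) : netDegree S v < netDegree S u := by
  have habove : #{w ∈ S | v < w} < #{w ∈ S | u < w} := by
    refine card_lt_card <| (ssubset_iff_of_subset ?_).mpr ⟨v, by simp [hv, huv]⟩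
    exact monotone_filter_right S fun _ _ => huv.trans
  have hbelow : #{w ∈ S | w < u} ≤ #{w ∈ S | w < v} :=
    card_le_card <| monotone_filter_right S fun _ _ hw => hw.trans huv
  unfold netDegree
  omega

theorem netDegree_pos_of_lt (hmin : |netDegree S v| ≤ |netDegree S u|) (hv : v ∈ S)
    (huv : u < v) : 0 < netDegree S u := by
  have hlt := netDegree_lt_netDegree hv huv
  by_contra! hu
  rw [abs_of_nonpos hu, abs_of_neg (hlt.trans_le hu)] at hmin
  omega

theorem netDegree_neg_of_lt (hmin : |netDegree S v| ≤ |netDegree S u|) (hu : u ∈ S)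
    (hvu : v < u) : netDegree S u < 0 := by
  have hlt := netDegree_lt_netDegree hu hvu
  by_contra! hnonneg
  rw [abs_of_nonneg hnonneg, abs_of_pos (hnonneg.trans_lt hlt)] at hmin
  omega

theorem netDegree_erase (hv : v ∈ S) (u : P) :
    netDegree (S.erase v) u =
      netDegree S u - ((if u < v then 1 else 0) - (if v < u then 1 else 0)) := by
  have habove := card_filter_erase_add hv (u < ·)
  have hbelow := card_filter_erase_add hv (· < u)
  unfold netDegree
  split_ifs at * <;> omega

theorem abs_netDegree_erase_add (hmin : |netDegree S v| ≤ |netDegree S u|) (hv : v ∈ S)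
    (hu : u ∈ S) :
    |netDegree (S.erase v) u| + ((if u < v then 1 else 0) + (if v < u then 1 else 0)) =
      |netDegree S u| := by
  rw [netDegree_erase hv]
  by_cases huv : u < v
  · have hpos := netDegree_pos_of_lt hmin hv huv
    simp only [huv, huv.not_gt, if_true, if_false]
    rw [abs_of_pos hpos, abs_of_nonneg (by omega)]
    ring
  by_cases hvu : v < u
  · have hneg := netDegree_neg_of_lt hmin hu hvu
    simp only [hvu, huv, if_true, if_false]
    rw [abs_of_neg hneg, abs_of_nonpos (by omega)]
    ring
  · simp [huv, hvu]

theorem sum_card_filter_lt_eq_sum_erase_add (hv : v ∈ S) :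
    ∑ u ∈ S, #{w ∈ S | u < w} = ∑ u ∈ S.erase v, #{w ∈ S.erase v | u < w} +
      ∑ u ∈ S.erase v, ((if u < v then 1 else 0) + (if v < u then 1 else 0)) := by
  have habove : #{w ∈ S | v < w} = ∑ u ∈ S.erase v, if v < u then 1 else 0 := by
    simp [← card_filter_erase_add hv]
  rw [← sum_erase_add _ _ hv, habove]
  simp only [← card_filter_erase_add hv, sum_add_distrib, add_assoc]

theorem sum_card_filter_lt_le_sum_abs_netDegree (S : Finset P) :
    ∑ v ∈ S, (#{u ∈ S | v < u} : ℤ) ≤ ∑ v ∈ S, |netDegree S v| := by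
  induction S using Finset.strongInduction with
  | H S ih =>
    rcases S.eq_empty_or_nonempty with rfl | hS
    · simp
    obtain ⟨v, hv, hmin⟩ := S.exists_min_image (|netDegree S ·|) hS
    have hrel := sum_card_filter_lt_eq_sum_erase_add hv
    zify at hrel
    calc ∑ u ∈ S, (#{w ∈ S | u < w} : ℤ)
      _ = ∑ u ∈ S.erase v, (#{w ∈ S.erase v | u < w} : ℤ) +
            ∑ u ∈ S.erase v, ((if u < v then 1 else 0) + (if v < u then 1 else 0)) := hrel
      _ ≤ ∑ u ∈ S.erase v, |netDegree (S.erase v) u| +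
            ∑ u ∈ S.erase v, ((if u < v then 1 else 0) + (if v < u then 1 else 0)) := by
          grw [ih _ (erase_ssubset hv)]
      _ = ∑ u ∈ S.erase v, |netDegree S u| := by
          rw [← sum_add_distrib]
          exact sum_congr rfl fun u hu =>
            have huS := mem_of_mem_erase hu
            abs_netDegree_erase_add (hmin u huS) hv huS
      _ ≤ ∑ u ∈ S, |netDegree S u| :=
          sum_le_sum_of_subset_of_nonneg (erase_subset v S) fun _ _ _ => abs_nonneg _

end NetDegree

section Cut

variable {P : Type*} [Fintype P] [PartialOrder P]

theorem e_eq_sum_card_above (X Y : Finset P) : e X Y = ∑ x ∈ X, #{y ∈ Y | x < y} := by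
  simp only [e, card_filter, sum_product]

theorem e_eq_sum_card_below (X Y : Finset P) : e X Y = ∑ y ∈ Y, #{x ∈ X | x < y} := by
  simp only [e, card_filter, sum_product_right]

theorem e_add_e_compl_left (X Y : Finset P) : e X Y + e Xᶜ Y = e univ Y := by
  simp only [e_eq_sum_card_above, sum_add_sum_compl]

theorem e_add_e_compl_right (X Y : Finset P) : e X Y + e X Yᶜ = e X univ := by
  simp only [e_eq_sum_card_below, sum_add_sum_compl]

theorem sum_netDegree (X S : Finset P) : ∑ v ∈ X, netDegree S v = (e X S : ℤ) - e S X := by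
  rw [e_eq_sum_card_above, e_eq_sum_card_below]
  push_cast
  exact sum_sub_distrib _ _

theorem netDegree_eq_e_sub_e (S : Finset P) (v : P) :
    netDegree S v = (e {v} S : ℤ) - e S {v} := by
  simpa using sum_netDegree {v} S

theorem sum_netDegree_univ (X : Finset P) :
    ∑ v ∈ X, netDegree univ v = (e X Xᶜ : ℤ) - e Xᶜ X := by
  rw [sum_netDegree, ← e_add_e_compl_right X X, ← e_add_e_compl_left X X]
  push_cast
  ring

theorem sum_abs_netDegree_univ {B : Finset P} (hB : ∀ v ∈ B, 0 ≤ netDegree univ v)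
    (hU : ∀ v ∈ Bᶜ, netDegree univ v ≤ 0) :
    ∑ v : P, |netDegree univ v| = 2 * ((e B Bᶜ : ℤ) - e Bᶜ B) := by
  calc ∑ v : P, |netDegree univ v|
    _ = ∑ v ∈ B, |netDegree univ v| + ∑ v ∈ Bᶜ, |netDegree univ v| :=
        (sum_add_sum_compl B _).symm
    _ = ∑ v ∈ B, netDegree univ v + ∑ v ∈ Bᶜ, -netDegree univ v :=
        congrArg₂ _ (sum_congr rfl fun v hv => abs_of_nonneg (hB v hv))
          (sum_congr rfl fun v hv => abs_of_nonpos (hU v hv))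
    _ = 2 * ((e B Bᶜ : ℤ) - e Bᶜ B) := by
        rw [sum_neg_distrib, sum_netDegree_univ, sum_netDegree_univ, compl_compl]
        ring

theorem large_cut_structured_general {B : Finset P}
    (hdeficit : ∀ v : P, e univ {v} < e {v} univ → v ∈ B)
    (hsurplus : ∀ v : P, e {v} univ < e univ {v} → v ∈ Bᶜ) :
    e (univ : Finset P) univ ≤ 2 * e B Bᶜ := by
  have hB : ∀ v ∈ B, 0 ≤ netDegree univ v := fun v hv => by
    have := mt (hsurplus v) (notMem_compl.mpr hv)
    rw [netDegree_eq_e_sub_e]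
    omega
  have hU : ∀ v ∈ Bᶜ, netDegree univ v ≤ 0 := fun v hv => by
    have := mt (hdeficit v) (mem_compl.mp hv)
    rw [netDegree_eq_e_sub_e]
    omega
  have hrel : (e (univ : Finset P) univ : ℤ) ≤ ∑ v : P, |netDegree univ v| := by
    rw [e_eq_sum_card_above]
    exact_mod_cast sum_card_filter_lt_le_sum_abs_netDegree (univ : Finset P)
  rw [sum_abs_netDegree_univ hB hU] at hrel
  omega

end Cut

/-- Every finite poset has a cut of size at least half the number of relations,
with all deficit elements in `B` and all surplus elements in `U`. -/
theorem large_cut_structured (P : Type*) [Fintype P] [PartialOrder P] :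
    ∃ B U : Finset P, Disjoint B U ∧ B ∪ U = Finset.univ ∧
      (∀ v : P, e (Finset.univ : Finset P) {v} < e {v} (Finset.univ : Finset P) → v ∈ B) ∧
      (∀ v : P, e {v} (Finset.univ : Finset P) < e (Finset.univ : Finset P) {v} → v ∈ U) ∧
      e (Finset.univ : Finset P) Finset.univ ≤ 2 * e B U := by
  let B : Finset P := {v | e univ {v} < e {v} univ}
  have hdeficit : ∀ v, e univ {v} < e {v} univ → v ∈ B := fun v hv => by simpa [B] using hv
  have hsurplus : ∀ v, e {v} univ < e univ {v} → v ∈ Bᶜ := fun v hv => by simpa [B] using hv.le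
  exact ⟨B, Bᶜ, disjoint_compl_right, union_compl B, hdeficit, hsurplus,
    large_cut_structured_general hdeficit hsurplus⟩
end

section
/- For every finite poset (P,<), the maximum directed cut size satisfies max over partitions (B,U) of e(B,U) ≥ ceil(e(P,P)/2), i.e., 2·maxcut ≥ e(P,P). -/
open Finset
open scoped Classical

/-!
Let `B` consist of the elements with at most as many elements below as above, and `U` of the
others. No element of `U` lies below an element of `B`, so it suffices that
`e B B + e U U ≤ e B U`.

For `y ∈ B` put `b y = #{x ∈ B | x < y}`, and for `q ∈ U` put `u q = #{z ∈ U | q < z}`. Climbing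
from `y` to a maximal element of `B`, above which there are only elements of `U`, shows that at
least `b y` elements of `U` lie above `y`. At least `b y` of these satisfy `u q < b y`: either all
do, or a maximal `q` that fails has at least `b y` elements above it, none of which fails. So
`e B B` is at most the number of pairs `y < q` across the cut with `u q < b y`. Dually, `e U U` is
at most the number of those with `b y < u q`, and the two kinds of pairs are disjoint.
-/

section Interedges

variable {α β : Type*} (r : α → β → Prop) [∀ a, DecidablePred (r a)]

theorem card_interedges_eq_sum (s : Finset α) (t : Finset β) :
    #(Rel.interedges r s t) = ∑ a ∈ s, #{b ∈ t | r a b} := by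
  simp only [Rel.interedges, card_filter, sum_product]

theorem card_interedges_swap (s : Finset α) (t : Finset β) :
    #(Rel.interedges (fun b a => r a b) t s) = #(Rel.interedges r s t) := by
  simp only [card_interedges_eq_sum]
  exact (sum_card_bipartiteAbove_eq_sum_card_bipartiteBelow r).symm

theorem card_interedges_union_self_le [DecidableEq α] {r : α → α → Prop} [DecidableRel r]
    {s t : Finset α} (hts : ∀ a ∈ t, ∀ b ∈ s, ¬ r a b) :
    #(Rel.interedges r (s ∪ t) (s ∪ t)) ≤
      #(Rel.interedges r s s) + #(Rel.interedges r t t) + #(Rel.interedges r s t) := by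
  have hsub : Rel.interedges r (s ∪ t) (s ∪ t) ⊆
      Rel.interedges r s s ∪ Rel.interedges r t t ∪ Rel.interedges r s t := by
    rintro ⟨a, b⟩ hab
    have := hts a
    simp only [mem_union, Rel.mk_mem_interedges_iff] at hab ⊢
    tauto
  exact (card_le_card hsub).trans <|
    (card_union_le _ _).trans <| Nat.add_le_add_right (card_union_le _ _) _

end Interedges

theorem card_above_le_card_above {P : Type*} (r : P → P → Prop) [IsTrans P r] [DecidableRel r]
    {a b : P} (hab : r a b) (s : Finset P) :
    #{z ∈ s | r b z} ≤ #{z ∈ s | r a z} :=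
  card_le_card <| monotone_filter_right s fun _ _ hbz => _root_.trans hab hbz

section StrictOrder

variable {P : Type*} (r : P → P → Prop) [IsStrictOrder P r] [DecidableRel r]

theorem le_card_filter_card_above_lt {s : Finset P} {k : ℕ} (hk : k ≤ #s) :
    k ≤ #{q ∈ s | #{z ∈ s | r q z} < k} := by
  by_cases hrich : ∃ q ∈ s, k ≤ #{z ∈ s | r q z}
  · obtain ⟨q, hq, hkq⟩ := hrich
    refine (s.wellFoundedOn (r := fun a b => r b a)).induction
      (P := fun q => k ≤ #{z ∈ s | r q z} → _) hq (fun q _ ih hkq => ?_) hkq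
    by_cases hnext : ∃ z ∈ s, r q z ∧ k ≤ #{w ∈ s | r z w}
    · obtain ⟨z, hz, hqz, hkz⟩ := hnext
      exact ih z hz hqz hkz
    · push Not at hnext
      exact hkq.trans <| card_le_card <| monotone_filter_right s hnext
  · push Not at hrich
    rwa [filter_true_of_mem hrich]

theorem card_below_le_card_above [DecidableEq P] {B U : Finset P}
    (hB : ∀ x ∈ B, #{w ∈ B ∪ U | r w x} ≤ #{w ∈ B ∪ U | r x w}) {y : P} (hy : y ∈ B) :
    #{x ∈ B | r x y} ≤ #{q ∈ U | r y q} := by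
  refine (B.wellFoundedOn (r := fun a b => r b a)).induction
    (P := fun y => #{x ∈ B | r x y} ≤ #{q ∈ U | r y q}) hy fun y hy ih => ?_
  by_cases hnext : ∃ z ∈ B, r y z
  · obtain ⟨z, hz, hyz⟩ := hnext
    calc #{x ∈ B | r x y}
        ≤ #{x ∈ B | r x z} := card_above_le_card_above (fun a b => r b a) hyz B
      _ ≤ #{q ∈ U | r z q} := ih z hz hyz
      _ ≤ #{q ∈ U | r y q} := card_above_le_card_above r hyz U
  · push Not at hnext
    calc #{x ∈ B | r x y}
        ≤ #{x ∈ B ∪ U | r x y} := card_le_card <| filter_subset_filter _ subset_union_left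
      _ ≤ #{q ∈ B ∪ U | r y q} := hB y hy
      _ = #{q ∈ U | r y q} := by rw [filter_union, filter_false_of_mem hnext, empty_union]

theorem card_interedges_self_le [DecidableEq P] {B U : Finset P}
    (hB : ∀ x ∈ B, #{w ∈ B ∪ U | r w x} ≤ #{w ∈ B ∪ U | r x w}) :
    #(Rel.interedges r B B) ≤
      #(Rel.interedges (fun y q => r y q ∧ #{z ∈ U | r q z} < #{x ∈ B | r x y}) B U) := by
  rw [← card_interedges_swap, card_interedges_eq_sum, card_interedges_eq_sum]
  refine sum_le_sum fun y hy => ?_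
  calc #{x ∈ B | r x y}
      ≤ #{q ∈ {q ∈ U | r y q} | #{z ∈ {q ∈ U | r y q} | r q z} < #{x ∈ B | r x y}} :=
        le_card_filter_card_above_lt r (card_below_le_card_above r hB hy)
    _ = #{q ∈ U | r y q ∧ #{z ∈ U | r q z} < #{x ∈ B | r x y}} := by
        rw [filter_filter]
        congr 1
        refine filter_congr fun q _ => and_congr_right fun hyq => ?_
        rw [filter_filter, filter_congr fun z _ =>
          and_iff_right_of_imp fun hqz : r q z => _root_.trans hyq hqz]

theorem card_interedges_self_add_card_interedges_self_le [DecidableEq P] {B U : Finset P}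
    (hB : ∀ x ∈ B, #{w ∈ B ∪ U | r w x} ≤ #{w ∈ B ∪ U | r x w})
    (hU : ∀ x ∈ U, #{w ∈ B ∪ U | r x w} ≤ #{w ∈ B ∪ U | r w x}) :
    #(Rel.interedges r B B) + #(Rel.interedges r U U) ≤ #(Rel.interedges r B U) := by
  let b (y : P) : ℕ := #{x ∈ B | r x y}
  let u (q : P) : ℕ := #{z ∈ U | r q z}
  have hBB : #(Rel.interedges r B B) ≤ #(Rel.interedges (fun y q => r y q ∧ u q < b y) B U) :=
    card_interedges_self_le r hB
  have hUU : #(Rel.interedges r U U) ≤ #(Rel.interedges (fun y q => r y q ∧ b y < u q) B U) := by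
    rw [← card_interedges_swap r U U, ← card_interedges_swap _ B U]
    rw [union_comm] at hU
    exact card_interedges_self_le (fun a b => r b a) hU
  refine (add_le_add hBB hUU).trans ?_
  rw [← card_union_of_disjoint]
  · refine card_le_card fun p hp => ?_
    simp only [mem_union, Rel.mem_interedges_iff] at hp ⊢
    tauto
  · exact disjoint_filter.2 fun p _ hub hbu => hub.2.not_gt hbu.2

theorem maxcut_half_general [DecidableEq P] (S : Finset P) :
    ∃ B U : Finset P, Disjoint B U ∧ B ∪ U = S ∧
      #(Rel.interedges r S S) ≤ 2 * #(Rel.interedges r B U) := by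
  let B : Finset P := {x ∈ S | #{w ∈ S | r w x} ≤ #{w ∈ S | r x w}}
  let U : Finset P := {x ∈ S | ¬ #{w ∈ S | r w x} ≤ #{w ∈ S | r x w}}
  have hBU : B ∪ U = S := filter_union_filter_not_eq _ S
  have inner : #(Rel.interedges r B B) + #(Rel.interedges r U U) ≤ #(Rel.interedges r B U) := by
    apply card_interedges_self_add_card_interedges_self_le
    · exact hBU ▸ fun x hx => (mem_filter.1 hx).2
    · exact hBU ▸ fun x hx => (not_le.1 (mem_filter.1 hx).2).le
  have no_back : ∀ x ∈ U, ∀ y ∈ B, ¬ r x y := fun x hx y hy hxy =>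
    (mem_filter.1 hx).2 <|
      calc #{w ∈ S | r w x}
          ≤ #{w ∈ S | r w y} := card_above_le_card_above (fun a b => r b a) hxy S
        _ ≤ #{w ∈ S | r y w} := (mem_filter.1 hy).2
        _ ≤ #{w ∈ S | r x w} := card_above_le_card_above r hxy S
  have total := card_interedges_union_self_le no_back
  rw [hBU] at total
  exact ⟨B, U, disjoint_filter_filter_not S S _, hBU, by lia⟩

end StrictOrder

/-- The maximum directed cut of a finite poset has at least half of all relations:
some cut `(B,U)` satisfies `2·e(B,U) ≥ e(P,P)`. -/
theorem maxcut_half (P : Type*) [Fintype P] [PartialOrder P] :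
    ∃ B U : Finset P, Disjoint B U ∧ B ∪ U = Finset.univ ∧
      e (Finset.univ : Finset P) Finset.univ ≤ 2 * e B U :=
  maxcut_half_general (· < ·) univ
end
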